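/- Let L be an algebraically closed field and K an algebraically closed field extension of L. Let d, e ≥ 1, let t ∈ L[X,Y,Z] be a nonzero squarefree homogeneous polynomial of degree e, and let p₁, …, p_r be finitely many nonzero points of L³ (marked points of the curve t = 0). Let (u_α) be a family of elements of K, indexed by the monomials α of degree d in X, Y, Z, which is algebraically independent over L, and set s = ∑_α u_α·α ∈ K[X,Y,Z]. Then s(pᵢ) ≠ 0 for each i = 1, …, r, and for every nonzero point p ∈ K³ with s(p) = 0 and t(p) = 0 the gradient vectors of s and t at p are linearly independent over K. -/

import Mathlib

open MvPolynomial

/-!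
The argument is a count of parameters. Fix a common zero `p`, normalised to have a coordinate `1`,
and let `δ` be the transcendence degree of its coordinates over the base field. The coefficients of
`s` are independent, so every set of them that can be recovered rationally from `p` and the other
coefficients has at most `δ` elements.

The equation `s(p) = 0` recovers one coefficient, so `1 ≤ δ`; in particular `s` has no algebraic
zeros. If `∇s(p)` is proportional to `∇t(p) ≠ 0`, one derivative gives the factor of proportionality
and the others, together with `s(p) = 0`, recover two coefficients, so `2 ≤ δ`.

On the other hand the cone over `p` has dimension `δ + 1` and lies on the surface `t = 0`, so
`δ ≤ 1`. If `∇t(p) = 0` it lies in the singular locus of this reduced surface, so `δ = 0`: a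
polynomial vanishing at the generic point of a component `q = 0` is divisible by `q`, and over a
perfect field some partial derivative of `q` is not.
-/

section PartialDerivatives

variable {σ R k : Type*}

theorem totalDegree_pderiv_lt [CommSemiring R] {f : MvPolynomial σ R} {i : σ}
    (h : pderiv i f ≠ 0) : (pderiv i f).totalDegree < f.totalDegree := by
  have hlt (m : σ →₀ ℕ) (hm : m ∈ (pderiv i f).support) :
      (m.sum fun _ n => n) < f.totalDegree := by
    rw [mem_support_iff, coeff_pderiv] at hm
    have hle := le_totalDegree (mem_support_iff.2 (left_ne_zero_of_mul hm))
    rwa [Finsupp.sum_add_index' (fun _ => rfl) (fun _ _ _ => rfl),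
      Finsupp.sum_single_index rfl] at hle
  obtain ⟨m, hm⟩ := support_nonempty.2 h
  exact (Finset.sup_lt_iff (Nat.zero_lt_of_lt (hlt m hm))).2 hlt

theorem pderiv_eq_zero_of_dvd [CommSemiring R] [NoZeroDivisors R] {f : MvPolynomial σ R} {i : σ}
    (h : f ∣ pderiv i f) : pderiv i f = 0 := by
  by_contra hne
  exact (totalDegree_pderiv_lt hne).not_ge (totalDegree_le_of_dvd_of_isDomain h hne)

theorem exists_expand_eq_of_forall_dvd [CommSemiring R] (p : ℕ) {f : MvPolynomial σ R}
    (h : ∀ m ∈ f.support, ∀ i, p ∣ m i) : ∃ g, expand p g = f := by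
  refine ⟨∑ m ∈ f.support, monomial (m.mapRange (· / p) (Nat.zero_div p)) (coeff m f), ?_⟩
  rw [map_sum]
  conv_rhs => rw [f.as_sum]
  refine Finset.sum_congr rfl fun m hm => ?_
  have hpm : p • m.mapRange (· / p) (Nat.zero_div p) = m :=
    Finsupp.ext fun i => by simpa using Nat.mul_div_cancel' (h m hm i)
  rw [expand_monomial, hpm]

/-- Since `expand 0` is evaluation at `1`, for `p = 0` this says that `f` is constant. -/
theorem exists_expand_eq_of_forall_pderiv_eq_zero [CommRing R] [NoZeroDivisors R] (p : ℕ)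
    [CharP R p] {f : MvPolynomial σ R} (h : ∀ i, pderiv i f = 0) : ∃ g, expand p g = f := by
  refine exists_expand_eq_of_forall_dvd p fun m hm i => ?_
  by_cases hmi : m i = 0
  · exact hmi ▸ dvd_zero p
  have hm' : m - Finsupp.single i 1 + Finsupp.single i 1 = m :=
    tsub_add_cancel_of_le (Finsupp.single_le_iff.2 (Nat.one_le_iff_ne_zero.2 hmi))
  have hcoeff := congrArg (coeff (m - Finsupp.single i 1)) (h i)
  rw [coeff_pderiv, hm', coeff_zero] at hcoeff
  have hcast := (mul_eq_zero.1 hcoeff).resolve_left (mem_support_iff.1 hm)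
  rw [← CharP.cast_eq_zero_iff R p, ← hcast, ← Nat.cast_succ, Finsupp.tsub_apply,
    Finsupp.single_eq_same, Nat.succ_eq_add_one, Nat.sub_add_cancel (Nat.pos_of_ne_zero hmi)]

theorem exists_pderiv_ne_zero_of_irreducible [Field k] [PerfectField k] {q : MvPolynomial σ k}
    (hq : Irreducible q) : ∃ i, pderiv i q ≠ 0 := by
  by_contra! h
  obtain ⟨p, hp⟩ := CharP.exists k
  obtain ⟨g, rfl⟩ := exists_expand_eq_of_forall_pderiv_eq_zero p h
  rcases CharP.char_is_prime_or_zero k p with hprime | rfl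
  · have : Fact p.Prime := ⟨hprime⟩
    have hpow : expand p g = (map (frobeniusEquiv k p).symm.toRingHom g) ^ p := by
      rw [← map_frobenius_expand, ← map_expand, map_map]
      simp [map_id]
    exact not_irreducible_pow hprime.ne_one (hpow ▸ hq)
  · rw [expand_zero_apply] at hq
    have hne : eval 1 g ≠ 0 := fun h0 => hq.ne_zero (by rw [h0, C_0])
    exact hq.not_isUnit ((isUnit_iff_ne_zero.2 hne).map C)

end PartialDerivatives

section VanishingIdeal

theorem dvd_of_irreducible_of_eval₂_eq_zero {R F : Type*} [CommRing R] [IsDomain R]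
    [IsGCDMonoid R] [Field F] {φ : R →+* F} (hφ : Function.Injective φ) {c : F}
    {q h : Polynomial R} (hq : Irreducible q) (hqc : q.eval₂ φ c = 0) (hhc : h.eval₂ φ c = 0) :
    q ∣ h := by
  algebraize [φ]
  let Q := FractionRing R
  have : FaithfulSMul R F := (faithfulSMul_iff_algebraMap_injective R F).2 hφ
  let _ : Algebra Q F := FractionRing.liftAlgebra R F
  have haeval (f : Polynomial R) (hf : f.eval₂ φ c = 0) :
      Polynomial.aeval c (f.map (algebraMap R Q)) = 0 := by
    rwa [Polynomial.aeval_map_algebraMap]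
  have hdeg : q.natDegree ≠ 0 := by
    intro h0
    rw [Polynomial.eq_C_of_natDegree_eq_zero h0] at hqc hq
    rw [Polynomial.eval₂_C, map_eq_zero_iff φ hφ] at hqc
    exact hq.ne_zero (by rw [hqc, Polynomial.C_0])
  have hprim : q.IsPrimitive := hq.isPrimitive hdeg
  have hirr : Irreducible (q.map (algebraMap R Q)) :=
    hprim.irreducible_iff_irreducible_map_fraction_map.1 hq
  have hint : IsIntegral Q c := IsAlgebraic.isIntegral ⟨_, hirr.ne_zero, haeval q hqc⟩
  have hassoc := (minpoly.irreducible hint).dvd_symm hirr (minpoly.dvd Q c (haeval q hqc))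
  exact hprim.dvd_of_fraction_map_dvd_fraction_map
    (hassoc.trans (minpoly.dvd Q c (haeval h hhc)))

variable {σ k F : Type*} [Field k] [Field F] [Algebra k F] {p : σ → F}

theorem dvd_of_irreducible_of_aeval_eq_zero {j : σ}
    (hp : AlgebraicIndependent k fun i : {i // i ≠ j} => p i) {q h : MvPolynomial σ k}
    (hq : Irreducible q) (hqp : aeval p q = 0) (hhp : aeval p h = 0) : q ∣ h := by
  classical
  let f : MvPolynomial σ k ≃ₐ[k] Polynomial (MvPolynomial {i // i ≠ j} k) :=
    (renameEquiv k (Equiv.optionSubtypeNe j).symm).trans (optionEquivLeft k _)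
  let φ : MvPolynomial {i // i ≠ j} k →+* F := (aeval fun i : {i // i ≠ j} => p i).toRingHom
  have hf (g : MvPolynomial σ k) : (f g).eval₂ φ (p j) = aeval p g := by
    induction g using MvPolynomial.induction_on with
    | C a => simp [f, φ]
    | add g₁ g₂ h₁ h₂ => rw [map_add, Polynomial.eval₂_add, h₁, h₂, map_add]
    | mul_X g i h =>
      rw [map_mul, Polynomial.eval₂_mul, h, map_mul, aeval_X]
      congr 1
      by_cases hi : i = j
      · subst hi; simp [f]
      · simp [f, φ, Equiv.optionSubtypeNe_symm_of_ne hi]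
  rw [← map_dvd_iff f]
  exact dvd_of_irreducible_of_eval₂_eq_zero (φ := φ) hp ((MulEquiv.irreducible_iff f).2 hq)
    ((hf q).trans hqp) ((hf h).trans hhp)

theorem exists_irreducible_dvd_of_aeval_eq_zero {t : MvPolynomial σ k} (ht0 : t ≠ 0)
    (htp : aeval p t = 0) : ∃ q, Irreducible q ∧ q ∣ t ∧ aeval p q = 0 := by
  obtain ⟨factors, hirr, hassoc⟩ := WfDvdMonoid.exists_factors t ht0
  have hprod : aeval p factors.prod = 0 := zero_dvd_iff.1 (htp ▸ map_dvd (aeval p) hassoc.dvd')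
  rw [map_multiset_prod, Multiset.prod_eq_zero_iff, Multiset.mem_map] at hprod
  obtain ⟨q, hqf, hqp⟩ := hprod
  exact ⟨q, hirr q hqf, (Multiset.dvd_prod hqf).trans hassoc.dvd, hqp⟩

end VanishingIdeal

section Gradient

variable {σ R A : Type*} [CommSemiring R] [CommSemiring A] [Algebra R A]

/-- The gradient of `f` at a point `p` with coordinates in an `R`-algebra. -/
noncomputable def gradientAt (f : MvPolynomial σ R) (p : σ → A) : σ → A :=
  fun i => aeval p (pderiv i f)

theorem gradientAt_map (f : MvPolynomial σ R) (p : σ → A) :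
    gradientAt (map (algebraMap R A) f) p = gradientAt f p :=
  funext fun i => by rw [gradientAt, pderiv_map, aeval_map_algebraMap]; rfl

theorem gradientAt_algebraMap_comp (B : Type*) [CommSemiring B] [Algebra A B] [Algebra R B]
    [IsScalarTower R A B] (f : MvPolynomial σ R) (p : σ → A) :
    gradientAt f (algebraMap A B ∘ p) = algebraMap A B ∘ gradientAt f p :=
  funext fun i => aeval_algebraMap_apply B p (pderiv i f)

theorem aeval_smul_of_isHomogeneous {f : MvPolynomial σ R} {n : ℕ} (hf : f.IsHomogeneous n)
    (c : A) (p : σ → A) : aeval (c • p) f = c ^ n * aeval p f := by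
  simp only [aeval_def, eval₂_eq, Finset.mul_sum]
  refine Finset.sum_congr rfl fun m hm => ?_
  have hdeg : ∑ i ∈ m.support, m i = n := by
    rw [← hf (mem_support_iff.1 hm), Finsupp.weight_apply]
    simp [Finsupp.sum]
  simp only [Pi.smul_apply, smul_eq_mul, mul_pow, Finset.prod_mul_distrib,
    Finset.prod_pow_eq_pow_sum, hdeg]
  ring

theorem gradientAt_smul_of_isHomogeneous {f : MvPolynomial σ R} {n : ℕ} (hf : f.IsHomogeneous n)
    (c : A) (p : σ → A) : gradientAt f (c • p) = c ^ (n - 1) • gradientAt f p :=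
  funext fun _ => aeval_smul_of_isHomogeneous hf.pderiv c p

theorem exists_ne_gradientAt_ne_zero_of_isHomogeneous [Finite σ] {f : MvPolynomial σ R} {n : ℕ}
    (hf : f.IsHomogeneous n) {p : σ → A} (hfp : aeval p f = 0) (hgrad : gradientAt f p ≠ 0)
    {i : σ} (hi : p i = 1) : ∃ j ≠ i, gradientAt f p j ≠ 0 := by
  have := Fintype.ofFinite σ
  by_contra! hzero
  have heuler := congrArg (aeval p) hf.sum_X_mul_pderiv
  rw [map_sum, map_nsmul, hfp, smul_zero, Finset.sum_eq_single i _ (by simp), map_mul, aeval_X, hi,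
    one_mul] at heuler
  · refine hgrad (funext fun j => ?_)
    by_cases hji : j = i
    · exact hji ▸ heuler
    · exact hzero j hji
  · intro j _ hji
    rw [map_mul, show aeval p (pderiv j f) = 0 from hzero j hji, mul_zero]

theorem linearIndependent_gradientAt_smul_iff {k F : Type*} [Field k] [Field F] [Algebra k F]
    {s : MvPolynomial σ F} {t : MvPolynomial σ k} {d e : ℕ} (hs : s.IsHomogeneous d)
    (ht : t.IsHomogeneous e) {c : F} (hc : c ≠ 0) {p : σ → F} :
    LinearIndependent F ![gradientAt s (c • p), gradientAt t (c • p)] ↔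
      LinearIndependent F ![gradientAt s p, gradientAt t p] := by
  rw [gradientAt_smul_of_isHomogeneous hs, gradientAt_smul_of_isHomogeneous ht]
  exact LinearIndependent.pair_smul_smul_iff (pow_ne_zero _ hc).isUnit (pow_ne_zero _ hc).isUnit

end Gradient

section ReducedHypersurface

theorem gradientAt_ne_zero_of_squarefree {σ k F : Type*} [Field k] [PerfectField k] [Field F]
    [Algebra k F] {p : σ → F} {j : σ} (hp : AlgebraicIndependent k fun i : {i // i ≠ j} => p i)
    {t : MvPolynomial σ k} (ht0 : t ≠ 0) (ht : Squarefree t) (htp : aeval p t = 0) :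
    gradientAt t p ≠ 0 := by
  obtain ⟨q, hq, ⟨h, rfl⟩, hqp⟩ := exists_irreducible_dvd_of_aeval_eq_zero ht0 htp
  have hhp : aeval p h ≠ 0 := fun hhp => by
    obtain ⟨r, rfl⟩ := dvd_of_irreducible_of_aeval_eq_zero hp hq hqp hhp
    exact hq.not_isUnit (ht q ⟨r, (mul_assoc q q r).symm⟩)
  obtain ⟨i, hi⟩ := exists_pderiv_ne_zero_of_irreducible hq
  intro hgrad
  have hqi : aeval p (pderiv i q) = 0 := by
    simpa [gradientAt, hqp, hhp] using congrFun hgrad i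
  exact hi (pderiv_eq_zero_of_dvd (dvd_of_irreducible_of_aeval_eq_zero hp hq hqp hqi))

end ReducedHypersurface

section PointTrdeg

open AlgebraicIndependent

variable {σ k F : Type*} [Field k] [Field F] [Algebra k F] {p : σ → F}

/-- The transcendence degree over `k` of the field generated by the coordinates of `p`, i.e. the
dimension of the `k`-locus of `p`, encoded as a rank in the algebraic matroid of `F` over `k`. -/
noncomputable def pointTrdeg (k : Type*) [Field k] [Algebra k F] (p : σ → F) : ℕ∞ :=
  (matroid k F).eRk (Set.range p)

theorem exists_intermediateField_coe_eq_matroid_closure (S : Set F) :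
    ∃ E : IntermediateField k F, (E : Set F) = (matroid k F).closure S := by
  refine ⟨{ (Subalgebra.algebraicClosure (Algebra.adjoin k S) F).restrictScalars k with
    inv_mem' := fun _ hx => IsAlgebraic.inv hx }, ?_⟩
  rw [matroid_closure_eq]
  rfl

theorem encard_le_pointTrdeg {T : Set σ} (hT : AlgebraicIndepOn k p T) :
    T.encard ≤ pointTrdeg k p := by
  have hindep : (matroid k F).Indep (Set.range fun i : T => p i) :=
    matroid_indep_iff.2 hT.to_subtype_range
  refine le_trans ?_ (hindep.encard_le_eRk_of_subset (Set.range_comp_subset_range _ p))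
  rw [← Set.image_univ, hT.injective.encard_image, Set.encard_univ]
  rfl

theorem exists_encard_eq_pointTrdeg (p : σ → F) :
    ∃ T : Set σ, T.encard = pointTrdeg k p ∧ AlgebraicIndepOn k p T := by
  obtain ⟨I, hI⟩ := (matroid k F).exists_isBasis (Set.range p)
  obtain ⟨T, -, hT⟩ := Set.SurjOn.exists_bijOn_subset (f := p) (s := Set.univ) (t := I)
    (by rw [Set.SurjOn, Set.image_univ]; exact hI.subset)
  refine ⟨T, ?_, ?_⟩
  · rw [pointTrdeg, ← hI.encard_eq_eRk, ← hT.image_eq, hT.injOn.encard_image]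
  · exact (matroid_indep_iff.1 hI.indep).comp (fun x : T => (⟨p x, hT.mapsTo x.2⟩ : I))
      fun x y hxy => Subtype.ext (hT.injOn x.2 y.2 (congrArg Subtype.val hxy))

theorem algebraicIndependent_of_card_le_pointTrdeg [Finite σ]
    (h : ENat.card σ ≤ pointTrdeg k p) : AlgebraicIndependent k p := by
  obtain ⟨T, hT, hind⟩ := exists_encard_eq_pointTrdeg (k := k) p
  have hT' : T = Set.univ := (Set.toFinite T).eq_of_subset_of_encard_le (Set.subset_univ T)
    (by rwa [Set.encard_univ, hT])
  subst hT'
  exact hind.comp (fun i => (⟨i, trivial⟩ : (Set.univ : Set σ))) fun _ _ h =>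
    congrArg Subtype.val h

theorem exists_algebraicIndependent_ne_of_pointTrdeg_add_one_eq_card [Finite σ]
    (h : pointTrdeg k p + 1 = ENat.card σ) :
    ∃ j : σ, AlgebraicIndependent k fun i : {i // i ≠ j} => p i := by
  obtain ⟨T, hT, hind⟩ := exists_encard_eq_pointTrdeg (k := k) p
  have hcompl : Tᶜ.encard = 1 := by
    rw [← hT, ← Set.encard_univ, ← Set.encard_add_encard_compl T] at h
    exact (ENat.add_right_injective_of_ne_top (Set.encard_ne_top_iff.2 T.toFinite) h).symm
  obtain ⟨j, hj⟩ := Set.encard_eq_one.1 hcompl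
  have hsub : {i | i ≠ j} ⊆ T := fun i hi => by
    by_contra hiT
    exact hi (hj.subset hiT)
  have hne : AlgebraicIndepOn k p {i | i ≠ j} := hind.mono hsub
  exact ⟨j, hne⟩

theorem pointTrdeg_eq_zero_of_isAlgebraic (hp : ∀ i, IsAlgebraic k (p i)) :
    pointTrdeg k p = 0 := by
  rw [pointTrdeg, Matroid.eRk_eq_zero_iff (Set.subset_univ _), ← Matroid.closure_empty,
    matroid_closure_eq]
  rintro _ ⟨i, rfl⟩
  exact (hp i).extendScalars (FaithfulSMul.algebraMap_injective k _)

theorem pointTrdeg_le_pointTrdeg_algebraMap_comp (p : σ → F) (F' : Type*) [Field F'] [Algebra k F']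
    [Algebra F F'] [IsScalarTower k F F'] :
    pointTrdeg k p ≤ pointTrdeg k (algebraMap F F' ∘ p) := by
  obtain ⟨T, hT, hind⟩ := exists_encard_eq_pointTrdeg (k := k) p
  rw [← hT]
  exact encard_le_pointTrdeg
    (hind.map' (f := IsScalarTower.toAlgHom k F F') (algebraMap F F').injective)

theorem pointTrdeg_add_one_le_pointTrdeg_smul {i : σ} (hi : p i = 1) {c : F}
    (hc : c ∉ (matroid k F).closure (Set.range p)) :
    pointTrdeg k p + 1 ≤ pointTrdeg k (c • p) := by
  obtain ⟨E, hE⟩ := exists_intermediateField_coe_eq_matroid_closure (k := k) (Set.range (c • p))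
  have hmem (j : σ) : c * p j ∈ E := by
    rw [← SetLike.mem_coe, hE]
    exact Matroid.mem_closure_of_mem _ ⟨j, rfl⟩
  have hcE : c ∈ E := by simpa [hi] using hmem i
  have hc0 : c ≠ 0 := by
    rintro rfl
    obtain ⟨E₀, hE₀⟩ := exists_intermediateField_coe_eq_matroid_closure (k := k) (Set.range p)
    exact hc (hE₀ ▸ E₀.zero_mem)
  rw [pointTrdeg, pointTrdeg, ← Matroid.eRk_insert_eq_add_one ⟨Set.mem_univ _, hc⟩,
    ← Matroid.eRk_closure_eq _ (Set.range (c • p)), ← hE]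
  refine Matroid.eRk_mono _ (Set.insert_subset hcE ?_)
  rintro _ ⟨j, rfl⟩
  simpa [inv_mul_cancel_left₀ hc0] using E.mul_mem (E.inv_mem hcE) (hmem j)

theorem notMem_matroid_closure_of_transcendental {F' : Type*} [Field F'] [Algebra k F']
    [Algebra F F'] [IsScalarTower k F F'] {x : F'} (hx : Transcendental F x) {S : Set F'}
    (hS : S ⊆ Set.range (algebraMap F F')) : x ∉ (matroid k F').closure S := by
  rw [matroid_closure_eq]
  intro h
  have hle : Algebra.adjoin k S ≤ (IsScalarTower.toAlgHom k F F').range := Algebra.adjoin_le hS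
  have halg : IsAlgebraic (IsScalarTower.toAlgHom k F F').range x :=
    IsAlgebraic.tower_top_of_subalgebra_le hle h
  exact hx (halg.of_ringHom_of_comp_eq (IsScalarTower.toAlgHom k F F').rangeRestrict
    (RingHom.id F') (AlgHom.rangeRestrict_surjective _) Function.injective_id rfl)

/-- Rescaling by an indeterminate produces a generic point of the affine cone over the locus of
`p`. -/
theorem pointTrdeg_add_one_le_pointTrdeg_X_smul {i : σ} (hi : p i = 1) :
    pointTrdeg k p + 1 ≤
      pointTrdeg k ((RatFunc.X : RatFunc F) • (algebraMap F (RatFunc F) ∘ p)) := by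
  have hX : RatFunc.X ∉ (matroid k (RatFunc F)).closure
      (Set.range (algebraMap F (RatFunc F) ∘ p)) :=
    notMem_matroid_closure_of_transcendental RatFunc.transcendental_X
      (Set.range_comp_subset_range _ _)
  calc pointTrdeg k p + 1 ≤ pointTrdeg k (algebraMap F (RatFunc F) ∘ p) + 1 := by
        gcongr
        exact pointTrdeg_le_pointTrdeg_algebraMap_comp p (RatFunc F)
    _ ≤ _ := pointTrdeg_add_one_le_pointTrdeg_smul (i := i) (by simp [hi]) hX

theorem encard_le_eRk_of_image_subset_closure {ι : Type*} [Finite ι] {u : ι → F}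
    (hu : AlgebraicIndependent k u) {A : Set ι} {P : Set F}
    (h : u '' A ⊆ (matroid k F).closure (u '' Aᶜ ∪ P)) : A.encard ≤ (matroid k F).eRk P := by
  have hsub : Set.range u ⊆ (matroid k F).closure (u '' Aᶜ ∪ P) := by
    rw [← Set.image_univ, ← Set.union_compl_self A, Set.image_union]
    exact Set.union_subset h (Set.subset_union_left.trans (Matroid.subset_closure _ _))
  have hle : A.encard + Aᶜ.encard ≤ (matroid k F).eRk P + Aᶜ.encard :=
    calc A.encard + Aᶜ.encard = (Set.range u).encard := by
          rw [Set.encard_add_encard_compl, ← Set.image_univ, hu.injective.encard_image]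
      _ = (matroid k F).eRk (Set.range u) :=
          (matroid_indep_iff.2 hu.to_subtype_range).eRk_eq_encard.symm
      _ ≤ (matroid k F).eRk (u '' Aᶜ ∪ P) := by
          rw [← Matroid.eRk_closure_eq _ (u '' Aᶜ ∪ P)]
          exact Matroid.eRk_mono _ hsub
      _ ≤ (u '' Aᶜ).encard + (matroid k F).eRk P := Matroid.eRk_union_le_encard_add_eRk _ _ _
      _ = (matroid k F).eRk P + Aᶜ.encard := by rw [hu.injective.encard_image, add_comm]
  exact (ENat.add_le_add_iff_right (Set.encard_ne_top_iff.2 (Set.toFinite _))).1 hle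

end PointTrdeg

section Hypersurface

variable {σ k F : Type*} [Finite σ] [Field k] [Field F] [Algebra k F] {p : σ → F}
  {t : MvPolynomial σ k}

theorem pointTrdeg_add_one_le_card (ht0 : t ≠ 0) (htp : aeval p t = 0) :
    pointTrdeg k p + 1 ≤ ENat.card σ := by
  refine Order.add_one_le_of_lt (lt_of_not_ge fun h => ht0 ?_)
  exact (algebraicIndependent_of_card_le_pointTrdeg h).eq_zero_of_aeval_eq_zero t htp

theorem pointTrdeg_add_two_le_card_of_gradientAt_eq_zero [PerfectField k] (ht0 : t ≠ 0)
    (ht : Squarefree t) (htp : aeval p t = 0) (hgrad : gradientAt t p = 0) :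
    pointTrdeg k p + 2 ≤ ENat.card σ := by
  have hle := pointTrdeg_add_one_le_card ht0 htp
  rcases hle.eq_or_lt with heq | hlt
  · obtain ⟨j, hj⟩ := exists_algebraicIndependent_ne_of_pointTrdeg_add_one_eq_card heq
    exact absurd hgrad (gradientAt_ne_zero_of_squarefree hj ht0 ht htp)
  · rw [← one_add_one_eq_two, ← add_assoc]
    exact Order.add_one_le_of_lt hlt

variable {e : ℕ} {i : σ}

theorem pointTrdeg_add_two_le_card_of_isHomogeneous (ht0 : t ≠ 0) (hte : t.IsHomogeneous e)
    (hi : p i = 1) (htp : aeval p t = 0) : pointTrdeg k p + 2 ≤ ENat.card σ := by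
  have hcone := pointTrdeg_add_one_le_card (p := RatFunc.X • (algebraMap F (RatFunc F) ∘ p)) ht0
    (by rw [aeval_smul_of_isHomogeneous hte, aeval_algebraMap_apply, htp, map_zero, mul_zero])
  calc pointTrdeg k p + 2 = pointTrdeg k p + 1 + 1 := by ring
    _ ≤ ENat.card σ := (add_le_add_left (pointTrdeg_add_one_le_pointTrdeg_X_smul hi) 1).trans hcone

theorem pointTrdeg_add_three_le_card_of_isHomogeneous_of_gradientAt_eq_zero [PerfectField k]
    (ht0 : t ≠ 0) (ht : Squarefree t) (hte : t.IsHomogeneous e) (hi : p i = 1) (htp : aeval p t = 0)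
    (hgrad : gradientAt t p = 0) : pointTrdeg k p + 3 ≤ ENat.card σ := by
  have hcone := pointTrdeg_add_two_le_card_of_gradientAt_eq_zero
    (p := RatFunc.X • (algebraMap F (RatFunc F) ∘ p)) ht0 ht
    (by rw [aeval_smul_of_isHomogeneous hte, aeval_algebraMap_apply, htp, map_zero, mul_zero])
    (by rw [gradientAt_smul_of_isHomogeneous hte, gradientAt_algebraMap_comp, hgrad]; ext; simp)
  calc pointTrdeg k p + 3 = pointTrdeg k p + 1 + 2 := by ring
    _ ≤ ENat.card σ := (add_le_add_left (pointTrdeg_add_one_le_pointTrdeg_X_smul hi) 2).trans hcone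

end Hypersurface

section GenericForm

variable {σ k F : Type*} [Field k] [Field F] [Algebra k F] {d : ℕ} {s : MvPolynomial σ F}
  {p : σ → F}

/-- `s` is the generic form of degree `d` over `k`: it is homogeneous of degree `d` and its
coefficients at all monomials of degree `d` are algebraically independent over `k`. -/
structure IsGenericForm (k : Type*) [Field k] [Algebra k F] (d : ℕ) (s : MvPolynomial σ F) :
    Prop where
  isHomogeneous : s.IsHomogeneous d
  algebraicIndependent :
    AlgebraicIndependent k fun α : {α : σ →₀ ℕ // α.degree = d} => s.coeff α

theorem IsGenericForm.encard_le_pointTrdeg [Finite σ] (hs : IsGenericForm k d s)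
    {A : Set (σ →₀ ℕ)} (hA : ∀ α ∈ A, α.degree = d)
    (h : ∀ E : IntermediateField k F, (∀ i, p i ∈ E) → (∀ α ∉ A, s.coeff α ∈ E) →
      ∀ α ∈ A, s.coeff α ∈ E) : A.encard ≤ pointTrdeg k p := by
  have : Finite {α : σ →₀ ℕ // α.degree = d} := Finsupp.finite_of_degree_eq d
  let u (α : {α : σ →₀ ℕ // α.degree = d}) : F := s.coeff α
  let A' : Set {α : σ →₀ ℕ // α.degree = d} := Subtype.val ⁻¹' A
  have hcard : A'.encard = A.encard :=
    Set.encard_preimage_of_injective_subset_range Subtype.val_injective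
      fun α hα => ⟨⟨α, hA α hα⟩, rfl⟩
  obtain ⟨E, hE⟩ :=
    exists_intermediateField_coe_eq_matroid_closure (k := k) (u '' A'ᶜ ∪ Set.range p)
  have hmem {x : F} (hx : x ∈ u '' A'ᶜ ∪ Set.range p) : x ∈ E := by
    rw [← SetLike.mem_coe, hE]
    exact Matroid.mem_closure_of_mem _ hx
  have hAE : ∀ α ∈ A, s.coeff α ∈ E := by
    refine h E (fun i => hmem (Or.inr ⟨i, rfl⟩)) fun α hα => ?_
    by_cases hd : α.degree = d
    · exact hmem (Or.inl ⟨⟨α, hd⟩, hα, rfl⟩)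
    · rw [hs.isHomogeneous.coeff_eq_zero hd]
      exact E.zero_mem
  rw [← hcard]
  refine encard_le_eRk_of_image_subset_closure hs.algebraicIndependent ?_
  rw [← hE]
  rintro _ ⟨α, hα, rfl⟩
  exact hAE α hα

theorem coeff_sub_sum_monomial_mem {E : Subring F} {A : Finset (σ →₀ ℕ)}
    (hs : ∀ α ∉ A, s.coeff α ∈ E) (β : σ →₀ ℕ) :
    (s - ∑ α ∈ A, monomial α (s.coeff α)).coeff β ∈ E := by
  classical
  rw [coeff_sub, coeff_sum]
  simp only [coeff_monomial, Finset.sum_ite_eq']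
  split_ifs with hβ
  · simp [E.zero_mem]
  · simpa using hs β hβ

theorem eval_pderiv_mem {E : Subring F} (hp : ∀ i, p i ∈ E) (hs : ∀ α, s.coeff α ∈ E) (j : σ) :
    eval p (pderiv j s) ∈ E :=
  eval_mem (fun α _ => by
    rw [coeff_pderiv]
    exact E.mul_mem (hs _) (E.add_mem (natCast_mem E _) E.one_mem)) hp

/-- The exponents of the monomials `X_i ^ n * X_l`; in the chart `p i = 1` these monomials restrict
to the coordinate functions. -/
noncomputable def linearExponent (n : ℕ) (i : σ) : σ ↪ (σ →₀ ℕ) where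
  toFun l := Finsupp.single i n + Finsupp.single l 1
  inj' := (add_right_injective _).comp (Finsupp.single_left_injective one_ne_zero)

theorem degree_linearExponent (n : ℕ) (i l : σ) : (linearExponent n i l).degree = n + 1 := by
  simp [linearExponent]

theorem eval_monomial_linearExponent {n : ℕ} {i : σ} (hi : p i = 1) (l : σ) (c : F) :
    eval p (monomial (linearExponent n i l) c) = c * p l := by
  rw [eval_monomial, linearExponent, Function.Embedding.coeFn_mk,
    Finsupp.prod_add_index' (by simp) (by simp [pow_add])]
  simp [hi]

theorem eval_pderiv_monomial_linearExponent [DecidableEq σ] {n : ℕ} {i j : σ} (hi : p i = 1)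
    (hji : j ≠ i) (l : σ) (c : F) :
    eval p (pderiv j (monomial (linearExponent n i l) c)) = if l = j then c else 0 := by
  rw [linearExponent, Function.Embedding.coeFn_mk, ← mul_one c, ← monomial_mul, Derivation.leibniz]
  by_cases hlj : l = j <;> simp [eval_monomial, hi, pderiv_monomial, hji.symm, hlj]

theorem sum_coeff_linearExponent_mul_mem {E : Subring F} {n : ℕ} {i : σ} {J : Finset σ}
    (hi : p i = 1) (hpE : ∀ i, p i ∈ E) (hsE : ∀ α ∉ J.map (linearExponent n i), s.coeff α ∈ E)
    (hsp : eval p s = 0) : ∑ l ∈ J, s.coeff (linearExponent n i l) * p l ∈ E := by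
  have h := eval_mem (fun α _ => coeff_sub_sum_monomial_mem hsE α) hpE
  rwa [map_sub, hsp, zero_sub, neg_mem_iff, Finset.sum_map, map_sum,
    Finset.sum_congr rfl fun l _ => eval_monomial_linearExponent hi l _] at h

theorem gradientAt_sub_coeff_linearExponent_mem [DecidableEq σ] {E : Subring F} {n : ℕ} {i j : σ}
    {J : Finset σ} (hi : p i = 1) (hji : j ≠ i) (hpE : ∀ i, p i ∈ E)
    (hsE : ∀ α ∉ J.map (linearExponent n i), s.coeff α ∈ E) :
    gradientAt s p j - (if j ∈ J then s.coeff (linearExponent n i j) else 0) ∈ E := by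
  have h := eval_pderiv_mem hpE (coeff_sub_sum_monomial_mem hsE) j
  rw [map_sub, map_sub, Finset.sum_map, map_sum, map_sum,
    Finset.sum_congr rfl fun l _ => eval_pderiv_monomial_linearExponent hi hji l _,
    Finset.sum_ite_eq'] at h
  exact h

/-- The `j`-th derivative of `s` at `p` lies in `E` and determines `a`; the other derivatives then
give the coefficients with `l ≠ i`, and the equation `s(p) = 0` gives the remaining one. -/
theorem coeff_linearExponent_mem_of_gradientAt_eq_smul [Fintype σ] [DecidableEq σ]
    {E : Subfield F} {n : ℕ} {i j : σ} {v : σ → F} {a : F} (hi : p i = 1) (hji : j ≠ i)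
    (hpE : ∀ i, p i ∈ E) (hvE : ∀ i, v i ∈ E)
    (hsE : ∀ α ∉ (Finset.univ.erase j).map (linearExponent n i), s.coeff α ∈ E)
    (hsp : eval p s = 0) (hgrad : gradientAt s p = a • v) (hvj : v j ≠ 0) :
    ∀ l ≠ j, s.coeff (linearExponent n i l) ∈ E := by
  have hgradE {l : σ} (hli : l ≠ i) := gradientAt_sub_coeff_linearExponent_mem (E := E.toSubring)
    hi hli hpE hsE
  have ha : a ∈ E := by
    have h : a * v j ∈ E := by simpa [hgrad] using hgradE hji
    simpa [mul_assoc, hvj] using E.mul_mem h (E.inv_mem (hvE j))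
  have hne {l : σ} (hlj : l ≠ j) (hli : l ≠ i) : s.coeff (linearExponent n i l) ∈ E := by
    have h : a * v l - s.coeff (linearExponent n i l) ∈ E := by
      simpa [hgrad, hlj] using hgradE hli
    simpa using E.sub_mem (E.mul_mem ha (hvE l)) h
  intro l hlj
  by_cases hli : l = i
  · subst hli
    have hsum := sum_coeff_linearExponent_mul_mem (E := E.toSubring) hi hpE hsE hsp
    rw [← Finset.add_sum_erase _ _ (Finset.mem_erase.2 ⟨hlj, Finset.mem_univ l⟩), hi, mul_one]
      at hsum
    refine (add_mem_cancel_right (E.sum_mem fun m hm => ?_)).1 hsum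
    simp only [Finset.mem_erase] at hm
    exact E.mul_mem (hne hm.2.1 hm.1) (hpE m)
  · exact hne hlj hli

theorem IsGenericForm.card_le_pointTrdeg_add_one_of_gradientAt_eq_smul [Finite σ] {n : ℕ}
    (hs : IsGenericForm k (n + 1) s) {i j : σ} (hi : p i = 1) (hji : j ≠ i) (hsp : eval p s = 0)
    {t : MvPolynomial σ k} {a : F} (hgrad : gradientAt s p = a • gradientAt t p)
    (htj : gradientAt t p j ≠ 0) : ENat.card σ ≤ pointTrdeg k p + 1 := by
  classical
  have := Fintype.ofFinite σ
  let A := (Finset.univ.erase j).map (linearExponent n i)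
  have hA : (A : Set (σ →₀ ℕ)).encard ≤ pointTrdeg k p := by
    refine hs.encard_le_pointTrdeg (fun α hα => ?_) fun E hpE hsE α hα => ?_
    · obtain ⟨l, -, rfl⟩ := Finset.mem_map.1 hα
      exact degree_linearExponent n i l
    · obtain ⟨l, hl, rfl⟩ := Finset.mem_map.1 hα
      exact coeff_linearExponent_mem_of_gradientAt_eq_smul (E := E.toSubfield) hi hji hpE
        (fun m => eval₂_mem (fun _ _ => E.algebraMap_mem _) hpE) hsE hsp hgrad htj l
        (Finset.ne_of_mem_erase hl)
  calc ENat.card σ = (A : Set (σ →₀ ℕ)).encard + 1 := by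
        rw [Set.encard_coe_eq_coe_finsetCard, Finset.card_map, ← Nat.cast_succ,
          Nat.succ_eq_add_one, Finset.card_erase_add_one (Finset.mem_univ j)]
        simp
    _ ≤ pointTrdeg k p + 1 := by gcongr

theorem IsGenericForm.one_le_pointTrdeg_of_eval_eq_zero [Finite σ] (hs : IsGenericForm k d s)
    {i : σ} (hi : p i ≠ 0) (hsp : eval p s = 0) : 1 ≤ pointTrdeg k p := by
  rw [← Set.encard_singleton (Finsupp.single i d)]
  refine hs.encard_le_pointTrdeg (by simp) fun E hpE hsE α hα => ?_
  obtain rfl := hα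
  have hg := eval_mem (fun α _ => coeff_sub_sum_monomial_mem (E := E.toSubring)
    (A := {Finsupp.single i d}) (by simpa using hsE) α) hpE
  have hmem : s.coeff (Finsupp.single i d) * p i ^ d ∈ E := by
    simpa [hsp, eval_monomial] using hg
  simpa [mul_assoc, hi] using E.mul_mem hmem (E.inv_mem (E.pow_mem (hpE i) d))

theorem IsGenericForm.eval_ne_zero_of_isAlgebraic [Finite σ] (hs : IsGenericForm k d s)
    (hp0 : p ≠ 0) (hp : ∀ i, IsAlgebraic k (p i)) : eval p s ≠ 0 := by
  intro hsp
  obtain ⟨i, hi⟩ := Function.ne_iff.1 hp0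
  have hle := hs.one_le_pointTrdeg_of_eval_eq_zero hi hsp
  rw [pointTrdeg_eq_zero_of_isAlgebraic hp] at hle
  exact one_ne_zero (nonpos_iff_eq_zero.1 hle)

end GenericForm

section Transversality

variable {σ k F : Type*} [Finite σ] [Field k] [Field F] [Algebra k F] {d e n : ℕ}
  {t : MvPolynomial σ k} {s : MvPolynomial σ F} {p : σ → F} {i : σ}

theorem IsGenericForm.linearIndependent_gradientAt_of_gradientAt_ne_zero
    (hs : IsGenericForm k (n + 1) s) (ht0 : t ≠ 0) (hte : t.IsHomogeneous e) (hi : p i = 1)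
    (hsp : eval p s = 0) (htp : aeval p t = 0) (hgrad : gradientAt t p ≠ 0) :
    LinearIndependent F ![gradientAt s p, gradientAt t p] := by
  rw [LinearIndependent.pair_symm_iff, LinearIndependent.pair_iff' hgrad]
  intro a ha
  obtain ⟨j, hji, hj⟩ := exists_ne_gradientAt_ne_zero_of_isHomogeneous hte htp hgrad hi
  have hupper := pointTrdeg_add_two_le_card_of_isHomogeneous ht0 hte hi htp
  have hlower := hs.card_le_pointTrdeg_add_one_of_gradientAt_eq_smul hi hji hsp ha.symm hj
  have hfin : pointTrdeg k p ≠ ⊤ := fun htop =>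
    (ENat.card_lt_top_of_finite (α := σ)).ne (by simpa [htop] using hupper)
  have hle : (2 : ℕ∞) ≤ 1 := (ENat.add_le_add_iff_left hfin).1 (hupper.trans hlower)
  exact absurd hle (by decide)

theorem IsGenericForm.gradientAt_ne_zero_of_card_le_three [PerfectField k]
    (hσ : ENat.card σ ≤ 3) (hs : IsGenericForm k d s) (ht0 : t ≠ 0) (ht : Squarefree t)
    (hte : t.IsHomogeneous e) (hi : p i = 1) (hsp : eval p s = 0) (htp : aeval p t = 0) :
    gradientAt t p ≠ 0 := by
  intro hgrad
  have hlower := hs.one_le_pointTrdeg_of_eval_eq_zero (hi ▸ one_ne_zero) hsp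
  have hupper :=
    pointTrdeg_add_three_le_card_of_isHomogeneous_of_gradientAt_eq_zero ht0 ht hte hi htp hgrad
  have hle : (1 + 3 : ℕ∞) ≤ 3 := (add_le_add_left hlower 3).trans (hupper.trans hσ)
  exact absurd hle (by decide)

theorem IsGenericForm.linearIndependent_gradientAt_of_card_le_three [PerfectField k]
    (hσ : ENat.card σ ≤ 3) (hs : IsGenericForm k (n + 1) s) (ht0 : t ≠ 0) (ht : Squarefree t)
    (hte : t.IsHomogeneous e) (hp0 : p ≠ 0) (hsp : eval p s = 0) (htp : aeval p t = 0) :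
    LinearIndependent F ![gradientAt s p, gradientAt t p] := by
  obtain ⟨i, hpi⟩ := Function.ne_iff.1 hp0
  have hc : (p i)⁻¹ ≠ 0 := inv_ne_zero hpi
  rw [← linearIndependent_gradientAt_smul_iff hs.isHomogeneous hte hc]
  have hi : ((p i)⁻¹ • p) i = 1 := inv_mul_cancel₀ hpi
  have hsq : eval ((p i)⁻¹ • p) s = 0 := by
    rw [← aeval_eq_eval, aeval_smul_of_isHomogeneous hs.isHomogeneous, aeval_eq_eval, hsp, mul_zero]
  have htq : aeval ((p i)⁻¹ • p) t = 0 := by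
    rw [aeval_smul_of_isHomogeneous hte, htp, mul_zero]
  exact hs.linearIndependent_gradientAt_of_gradientAt_ne_zero ht0 hte hi hsq htq
    (hs.gradientAt_ne_zero_of_card_le_three hσ ht0 ht hte hi hsq htq)

end Transversality

section PlaneCurves

theorem IsGenericForm.of_fin_three {k F : Type*} [Field k] [Field F] [Algebra k F] {d : ℕ}
    {s : MvPolynomial (Fin 3) F} (hs : s.IsHomogeneous d)
    (hgen : AlgebraicIndependent k
      (fun α : {α : Fin 3 →₀ ℕ // α 0 + α 1 + α 2 = d} => s.coeff (α : Fin 3 →₀ ℕ))) :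
    IsGenericForm k d s where
  isHomogeneous := hs
  algebraicIndependent := hgen.comp
    (Equiv.subtypeEquivRight fun α => by rw [Finsupp.degree_eq_sum, Fin.sum_univ_three])
    (Equiv.injective _)

theorem moving_lemma_marked_points_general {k F : Type*} [Field k] [PerfectField k] [Field F]
    [Algebra k F] {d e : ℕ} (hd : 1 ≤ d) {t : MvPolynomial (Fin 3) k} (ht0 : t ≠ 0)
    (htsf : Squarefree t) (hthom : t.IsHomogeneous e) {s : MvPolynomial (Fin 3) F}
    (hs : IsGenericForm k d s) :
    (∀ p : Fin 3 → F, p ≠ 0 → (∀ i, IsAlgebraic k (p i)) → eval p s ≠ 0) ∧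
    (∀ p : Fin 3 → F, p ≠ 0 → eval p s = 0 → eval p (map (algebraMap k F) t) = 0 →
      LinearIndependent F
        ![(fun i : Fin 3 => eval p (pderiv i s)),
          (fun i : Fin 3 => eval p (pderiv i (map (algebraMap k F) t)))]) := by
  refine ⟨fun p hp0 hp => hs.eval_ne_zero_of_isAlgebraic hp0 hp, fun p hp0 hsp htp => ?_⟩
  obtain ⟨n, rfl⟩ := Nat.exists_eq_add_of_le' hd
  rw [eval_map, ← aeval_def] at htp
  have hind := hs.linearIndependent_gradientAt_of_card_le_three (by simp) ht0 htsf hthom hp0 hsp htp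
  rwa [← gradientAt_map t p] at hind

end PlaneCurves

/-- Moving Lemma for curves with finitely many marked points (Lemma 4.14): let
`t ∈ L[X,Y,Z]` be a nonzero squarefree homogeneous polynomial of degree `e`, let
`p₁, …, p_r` be finitely many nonzero marked points in `L³`, and let `s ∈ K[X,Y,Z]` be
homogeneous of degree `d` with all of its coefficients (indexed by the monomials of
degree `d`) algebraically independent over `L`.  Then `s` does not vanish at any marked
point, and at every nonzero common zero `p` of `s` and `t` the gradients of `s` and `t`
are linearly independent over `K`. -/
theorem moving_lemma_marked_points (L K : Type) [Field L] [IsAlgClosed L]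
    [Field K] [IsAlgClosed K] [Algebra L K] (d e : ℕ) (hd : 1 ≤ d) (he : 1 ≤ e)
    (t : MvPolynomial (Fin 3) L) (ht0 : t ≠ 0) (htsf : Squarefree t)
    (hthom : t.IsHomogeneous e)
    (r : ℕ) (pt : Fin r → (Fin 3 → L)) (hpt : ∀ i, pt i ≠ 0)
    (s : MvPolynomial (Fin 3) K) (hshom : s.IsHomogeneous d)
    (hgen : AlgebraicIndependent L
      (fun α : {α : Fin 3 →₀ ℕ // α 0 + α 1 + α 2 = d} => s.coeff (α : Fin 3 →₀ ℕ))) :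
    (∀ i, eval (fun j => algebraMap L K (pt i j)) s ≠ 0) ∧
    (∀ p : Fin 3 → K, p ≠ 0 → eval p s = 0 →
      eval p (MvPolynomial.map (algebraMap L K) t) = 0 →
      LinearIndependent K
        ![(fun i : Fin 3 => eval p (pderiv i s)),
          (fun i : Fin 3 => eval p (pderiv i (MvPolynomial.map (algebraMap L K) t)))]) := by
  have hgeneral := moving_lemma_marked_points_general hd ht0 htsf hthom (.of_fin_three hshom hgen)
  refine ⟨fun i => hgeneral.1 _ ?_ fun _ => isAlgebraic_algebraMap _, hgeneral.2⟩
  exact fun h => hpt i (funext fun j => (map_eq_zero (algebraMap L K)).1 (congrFun h j))
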